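/- Appendix Lemma (coercivity of the relative entropy): Assume ψ̂ ∈ C³(ℝ^{19} × (0,∞)) satisfies the growth conditions, that ∇²_ξ ψ̂(ξ,θ) is positive definite and ∂_θ η̂(ξ,θ) > 0 for all (ξ,θ), and let M, δ > 0. Then there exist R = R(M,δ) and constants K₁ = K₁(M,δ,c) > 0, K₂ = K₂(M,δ,c) > 0 such that for every (ξ,v,θ) ∈ ℝ^{19} × ℝ³ × (0,∞) with ξ = (F,ζ,w) and every (ξ̄,v̄,θ̄) ∈ Γ_{M,δ}: I(ξ,v,θ|ξ̄,v̄,θ̄) ≥ (K₁/2)(|ξ|_{p,q,r} + θ^ℓ + |v|²) whenever |ξ|_{p,q,r} + θ^ℓ + |v|² > R, and I(ξ,v,θ|ξ̄,v̄,θ̄) ≥ K₂(|F − F̄|² + |ζ − ζ̄|² + |w − w̄|² + |θ − θ̄|² + |v − v̄|²) whenever |ξ|_{p,q,r} + θ^ℓ + |v|² ≤ R. -/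

import Mathlib

open Real MeasureTheory Filter Set Topology ENNReal NNReal

noncomputable section

abbrev Vec3 := Fin 3 → ℝ
abbrev Mat3 := Fin 3 → Fin 3 → ℝ
abbrev Xi := Mat3 × Mat3 × ℝ
abbrev Idx := (Fin 3 × Fin 3) ⊕ ((Fin 3 × Fin 3) ⊕ Unit)
abbrev FullState := Xi × Vec3 × ℝ

/-- Levi-Civita symbol on three indices. -/
def eps3 (i j k : Fin 3) : ℝ :=
  if (i, j, k) = (0, 1, 2) ∨ (i, j, k) = (1, 2, 0) ∨ (i, j, k) = (2, 0, 1) then 1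
  else if (i, j, k) = (2, 1, 0) ∨ (i, j, k) = (1, 0, 2) ∨ (i, j, k) = (0, 2, 1) then -1
  else 0

/-- Cofactor matrix (cof F)_{iα} = (1/2) ε_{ijk} ε_{αβγ} F_{jβ} F_{kγ}. -/
def cof3 (F : Mat3) : Mat3 := fun i α =>
  (1/2) * ∑ j, ∑ k, ∑ β, ∑ γ, eps3 i j k * eps3 α β γ * F j β * F k γ

/-- det F = (1/6) ε_{ijk} ε_{αβγ} F_{iα} F_{jβ} F_{kγ}. -/
def det3 (F : Mat3) : ℝ :=
  (1/6) * ∑ i, ∑ j, ∑ k, ∑ α, ∑ β, ∑ γ,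
    eps3 i j k * eps3 α β γ * F i α * F j β * F k γ

/-- The vector of null Lagrangians Φ(F) = (F, cof F, det F). -/
def Phi3 (F : Mat3) : Xi := (F, cof3 F, det3 F)

/-- Component ξ^B of ξ ∈ ℝ^19. -/
def xiComp (ξ : Xi) : Idx → ℝ
  | .inl (i, α) => ξ.1 i α
  | .inr (.inl (i, α)) => ξ.2.1 i α
  | .inr (.inr _) => ξ.2.2

def updMat (F : Mat3) (i α : Fin 3) (s : ℝ) : Mat3 :=
  Function.update F i (Function.update (F i) α s)

/-- Update component B of ξ to value s. -/
def xiUpd (ξ : Xi) : Idx → ℝ → Xi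
  | .inl (i, α), s => (updMat ξ.1 i α s, ξ.2)
  | .inr (.inl (i, α)), s => (ξ.1, updMat ξ.2.1 i α s, ξ.2.2)
  | .inr (.inr _), s => (ξ.1, ξ.2.1, s)

/-- ∂Φ^B/∂F_{iα}(F). -/
def dPhi (B : Idx) (i α : Fin 3) (F : Mat3) : ℝ :=
  deriv (fun s => xiComp (Phi3 (updMat F i α s)) B) (F i α)

/-- Partial derivative ∂ψ̂/∂ξ^B of a function ψ̂(ξ, θ). -/
def dXi (B : Idx) (ψ : Xi → ℝ → ℝ) (ξ : Xi) (θ : ℝ) : ℝ :=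
  deriv (fun s => ψ (xiUpd ξ B s) θ) (xiComp ξ B)

/-- Partial derivative ∂ψ̂/∂θ. -/
def dTh (ψ : Xi → ℝ → ℝ) (ξ : Xi) (θ : ℝ) : ℝ :=
  deriv (fun s => ψ ξ s) θ

/-- η̂(ξ,θ) = −∂_θ ψ̂(ξ,θ). -/
def etaHat (ψ : Xi → ℝ → ℝ) (ξ : Xi) (θ : ℝ) : ℝ := -(dTh ψ ξ θ)

/-- ê(ξ,θ) = ψ̂(ξ,θ) − θ ∂_θ ψ̂(ξ,θ). -/
def eHat (ψ : Xi → ℝ → ℝ) (ξ : Xi) (θ : ℝ) : ℝ := ψ ξ θ - θ * dTh ψ ξ θ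

/-- Spatial partial derivative ∂_α of a space-time field. -/
def pdx (α : Fin 3) (f : Vec3 → ℝ → ℝ) (x : Vec3) (t : ℝ) : ℝ :=
  deriv (fun s => f (Function.update x α s) t) (x α)

/-- Time derivative ∂_t of a space-time field. -/
def pdt (f : Vec3 → ℝ → ℝ) (x : Vec3) (t : ℝ) : ℝ :=
  deriv (fun s => f x s) t

def mnorm (F : Mat3) : ℝ := Real.sqrt (∑ i, ∑ j, (F i j)^2)
def vnorm (v : Vec3) : ℝ := Real.sqrt (∑ i, (v i)^2)

/-- |ξ|_{p,q,r} = |F|^p + |ζ|^q + |w|^r. -/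
def xiNorm (p q r : ℝ) (ξ : Xi) : ℝ :=
  mnorm ξ.1 ^ p + mnorm ξ.2.1 ^ q + |ξ.2.2| ^ r

/-- The compact set Γ_{M,δ}. -/
def Gamma (M δ : ℝ) : Set FullState :=
  {U | mnorm U.1.1 ≤ M ∧ mnorm U.1.2.1 ≤ M ∧ |U.1.2.2| ≤ M ∧
       vnorm U.2.1 ≤ M ∧ δ ≤ U.2.2 ∧ U.2.2 ≤ M}

/-- Relative free energy ψ̂(ξ,θ|ξ̄,θ̄). -/
def psiRel (ψ : Xi → ℝ → ℝ) (ξ : Xi) (θ : ℝ) (ξ' : Xi) (θ' : ℝ) : ℝ :=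
  ψ ξ θ - ψ ξ' θ' - (∑ B : Idx, dXi B ψ ξ' θ' * (xiComp ξ B - xiComp ξ' B))
    + etaHat ψ ξ' θ' * (θ - θ')

/-- Relative entropy function η̂(ξ,θ|ξ̄,θ̄). -/
def etaRel (ψ : Xi → ℝ → ℝ) (ξ : Xi) (θ : ℝ) (ξ' : Xi) (θ' : ℝ) : ℝ :=
  etaHat ψ ξ θ - etaHat ψ ξ' θ'
    - (∑ B : Idx, dXi B (etaHat ψ) ξ' θ' * (xiComp ξ B - xiComp ξ' B))
    - dTh (etaHat ψ) ξ' θ' * (θ - θ')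

/-- Relative stress (∂ψ̂/∂ξ^B)(ξ,θ|ξ̄,θ̄). -/
def dXiRel (B : Idx) (ψ : Xi → ℝ → ℝ) (ξ : Xi) (θ : ℝ) (ξ' : Xi) (θ' : ℝ) : ℝ :=
  dXi B ψ ξ θ - dXi B ψ ξ' θ'
    - (∑ A : Idx, dXi A (dXi B ψ) ξ' θ' * (xiComp ξ A - xiComp ξ' A))
    - dTh (dXi B ψ) ξ' θ' * (θ - θ')

/-- Relative entropy I(ξ,v,θ|ξ̄,v̄,θ̄). -/
def relEnt (ψ : Xi → ℝ → ℝ) (ξ : Xi) (v : Vec3) (θ : ℝ)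
    (ξ' : Xi) (v' : Vec3) (θ' : ℝ) : ℝ :=
  psiRel ψ ξ θ ξ' θ' + (1/2) * (∑ i, (v i - v' i)^2)
    + (etaHat ψ ξ θ - etaHat ψ ξ' θ') * (θ - θ')

/-- ψ̂ is C³ on ℝ^19 × (0,∞). -/
def PsiC3 (ψ : Xi → ℝ → ℝ) : Prop :=
  ContDiffOn ℝ 3 (fun p : Xi × ℝ => ψ p.1 p.2) (Set.univ ×ˢ Set.Ioi (0:ℝ))

/-- ∇²_ξ ψ̂ > 0 and ∂_θ η̂ > 0. -/
def PsiConvex (ψ : Xi → ℝ → ℝ) : Prop :=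
  ∀ ξ : Xi, ∀ θ : ℝ, 0 < θ →
    (∀ u : Idx → ℝ, u ≠ 0 →
      0 < ∑ A : Idx, ∑ B : Idx, dXi A (dXi B ψ) ξ θ * u A * u B) ∧
    0 < dTh (etaHat ψ) ξ θ

def gradFnorm (ψ : Xi → ℝ → ℝ) (ξ : Xi) (θ : ℝ) : ℝ :=
  Real.sqrt (∑ i, ∑ α, (dXi (.inl (i, α)) ψ ξ θ)^2)
def gradZnorm (ψ : Xi → ℝ → ℝ) (ξ : Xi) (θ : ℝ) : ℝ :=
  Real.sqrt (∑ i, ∑ α, (dXi (.inr (.inl (i, α))) ψ ξ θ)^2)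
def gradWnorm (ψ : Xi → ℝ → ℝ) (ξ : Xi) (θ : ℝ) : ℝ :=
  |dXi (.inr (.inr ())) ψ ξ θ|

/-- The growth conditions (gr.con.1)-(gr.con.3). -/
def GrowthCond (ψ : Xi → ℝ → ℝ) (c p q r ℓ : ℝ) : Prop :=
  0 < c ∧
  (∀ ξ : Xi, ∀ θ : ℝ, 0 < θ →
    c * (xiNorm p q r ξ + θ ^ ℓ) - c ≤ eHat ψ ξ θ ∧
    eHat ψ ξ θ ≤ c * (xiNorm p q r ξ + θ ^ ℓ) + c) ∧
  (∀ ε : ℝ, 0 < ε → ∃ R : ℝ, ∀ ξ : Xi, ∀ θ : ℝ, 0 < θ →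
    R < xiNorm p q r ξ + θ ^ ℓ →
    gradFnorm ψ ξ θ + gradZnorm ψ ξ θ ^ (p/(p-1)) + gradWnorm ψ ξ θ ^ (p/(p-2))
      ≤ ε * (xiNorm p q r ξ + θ ^ ℓ)) ∧
  (∀ ε : ℝ, 0 < ε → ∃ R : ℝ, ∀ ξ : Xi, ∀ θ : ℝ, 0 < θ →
    R < xiNorm p q r ξ + θ ^ ℓ →
    |dTh ψ ξ θ| ≤ ε * (xiNorm p q r ξ + θ ^ ℓ))

/-- The augmented thermoviscoelasticity system with fields (Z, Q, r), at a point (x,t). -/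
def AugSys (ψ : Xi → ℝ → ℝ) (ξf : Vec3 → ℝ → Xi) (vf : Vec3 → ℝ → Vec3)
    (θf : Vec3 → ℝ → ℝ) (Z : Vec3 → ℝ → Mat3) (Q : Vec3 → ℝ → Vec3)
    (r : Vec3 → ℝ → ℝ) (x : Vec3) (t : ℝ) : Prop :=
  (∀ B : Idx, pdt (fun y s => xiComp (ξf y s) B) x t
      = ∑ α, pdx α (fun y s => ∑ i, dPhi B i α (ξf y s).1 * vf y s i) x t) ∧
  (∀ i, pdt (fun y s => vf y s i) x t
      = ∑ α, pdx α (fun y s =>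
          ∑ B : Idx, dXi B ψ (ξf y s) (θf y s) * dPhi B i α (ξf y s).1) x t
        + ∑ α, pdx α (fun y s => Z y s i α) x t) ∧
  (pdt (fun y s => (1/2) * (∑ i, (vf y s i)^2) + eHat ψ (ξf y s) (θf y s)) x t
      = ∑ α, pdx α (fun y s => ∑ i,
          (∑ B : Idx, dXi B ψ (ξf y s) (θf y s) * dPhi B i α (ξf y s).1) * vf y s i) x t
        + ∑ α, pdx α (fun y s => ∑ i, Z y s i α * vf y s i) x t
        + ∑ α, pdx α (fun y s => Q y s α) x t + r x t) ∧
  (∀ i α β, pdx α (fun y s => (ξf y s).1 i β) x t = pdx β (fun y s => (ξf y s).1 i α) x t)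

/-- The entropy production identity for the augmented system. -/
def EntropyIdent (ψ : Xi → ℝ → ℝ) (ξf : Vec3 → ℝ → Xi) (vf : Vec3 → ℝ → Vec3)
    (θf : Vec3 → ℝ → ℝ) (Z : Vec3 → ℝ → Mat3) (Q : Vec3 → ℝ → Vec3)
    (r : Vec3 → ℝ → ℝ) (x : Vec3) (t : ℝ) : Prop :=
  pdt (fun y s => etaHat ψ (ξf y s) (θf y s)) x t
    - ∑ α, pdx α (fun y s => Q y s α / θf y s) x t
  = (∑ α, pdx α θf x t * Q x t α) / (θf x t)^2
    + (∑ α, ∑ i, pdx α (fun y s => vf y s i) x t * Z x t i α) / θf x t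
    + r x t / θf x t

/-- Newtonian viscous stress Z = μ ∇v. -/
def newtonianZ (μ : Mat3 → ℝ → ℝ) (ξf : Vec3 → ℝ → Xi) (vf : Vec3 → ℝ → Vec3)
    (θf : Vec3 → ℝ → ℝ) : Vec3 → ℝ → Mat3 :=
  fun x t i α => μ (ξf x t).1 (θf x t) * pdx α (fun y s => vf y s i) x t

/-- Fourier heat flux Q = k ∇θ. -/
def fourierQ (k : Mat3 → ℝ → ℝ) (ξf : Vec3 → ℝ → Xi)
    (θf : Vec3 → ℝ → ℝ) : Vec3 → ℝ → Vec3 :=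
  fun x t α => k (ξf x t).1 (θf x t) * pdx α θf x t

/-- The entropy identity for Newtonian viscosity and Fourier heat conduction (zero supply). -/
def EntropyIdentNF (ψ : Xi → ℝ → ℝ) (μ k : Mat3 → ℝ → ℝ) (ξf : Vec3 → ℝ → Xi)
    (vf : Vec3 → ℝ → Vec3) (θf : Vec3 → ℝ → ℝ) (x : Vec3) (t : ℝ) : Prop :=
  pdt (fun y s => etaHat ψ (ξf y s) (θf y s)) x t
    - ∑ α, pdx α (fun y s =>
        k (ξf y s).1 (θf y s) * pdx α θf y s / θf y s) x t
  = k (ξf x t).1 (θf x t) * (∑ α, (pdx α θf x t)^2) / (θf x t)^2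
    + μ (ξf x t).1 (θf x t) *
        (∑ α, ∑ i, (pdx α (fun y s => vf y s i) x t)^2) / θf x t

/-- Fundamental domain of the 3-torus. -/
def Box : Set Vec3 := Set.Icc 0 1

/-- Periodicity in the space variables with period 1. -/
def PeriodicX {E : Type*} (f : Vec3 → ℝ → E) : Prop :=
  ∀ (x : Vec3) (t : ℝ) (α : Fin 3), f (x + Pi.single α 1) t = f x t

/-- C^n regularity of a space-time field. -/
def FieldC {E : Type*} [NormedAddCommGroup E] [NormedSpace ℝ E]
    (n : ℕ) (f : Vec3 → ℝ → E) : Prop :=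
  ContDiff ℝ n (fun p : Vec3 × ℝ => f p.1 p.2)

/-- Spatial integral of the relative entropy at time t. -/
def relEntInt (ψ : Xi → ℝ → ℝ) (ξf : Vec3 → ℝ → Xi) (vf : Vec3 → ℝ → Vec3)
    (θf : Vec3 → ℝ → ℝ) (ξf' : Vec3 → ℝ → Xi) (vf' : Vec3 → ℝ → Vec3)
    (θf' : Vec3 → ℝ → ℝ) (t : ℝ) : ℝ :=
  ∫ x in Box, relEnt ψ (ξf x t) (vf x t) (θf x t) (ξf' x t) (vf' x t) (θf' x t)


/-- Spatial partial derivative of a static field. -/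
def pds (α : Fin 3) (f : Vec3 → ℝ) (x : Vec3) : ℝ :=
  deriv (fun s => f (Function.update x α s)) (x α)

/-- Deformation gradient ∇y of a static map y : ℝ³ → ℝ³. -/
def gradV (y : Vec3 → Vec3) (x : Vec3) : Mat3 :=
  fun i α => pds α (fun z => y z i) x

/-- ∂ψ/∂F_{iα} for ψ = ψ(F,θ). -/
def dFM (i α : Fin 3) (ψ : Mat3 → ℝ → ℝ) (F : Mat3) (θ : ℝ) : ℝ :=
  deriv (fun s => ψ (updMat F i α s) θ) (F i α)

/-- ∂ψ/∂θ for ψ = ψ(F,θ). -/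
def dThM (ψ : Mat3 → ℝ → ℝ) (F : Mat3) (θ : ℝ) : ℝ :=
  deriv (fun s => ψ F s) θ

/-- Index set for the full extended state U = (ξ, v, θ) ∈ ℝ²³. -/
abbrev UIdx := Idx ⊕ (Fin 3 ⊕ Unit)

def uComp (U : FullState) : UIdx → ℝ
  | .inl B => xiComp U.1 B
  | .inr (.inl i) => U.2.1 i
  | .inr (.inr _) => U.2.2

def uUpd (U : FullState) : UIdx → ℝ → FullState
  | .inl B, s => (xiUpd U.1 B s, U.2)
  | .inr (.inl i), s => (U.1, Function.update U.2.1 i s, U.2.2)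
  | .inr (.inr _), s => (U.1, U.2.1, s)

/-- Partial derivative in the state variables (ξ,v,θ). -/
def pdU (B : UIdx) (f : FullState → ℝ) (U : FullState) : ℝ :=
  deriv (fun s => f (uUpd U B s)) (uComp U B)

/-- Second partial derivative in the state variables (ξ,v,θ). -/
def pdU2 (A B : UIdx) (f : FullState → ℝ) (U : FullState) : ℝ :=
  pdU A (fun V => pdU B f V) U

/-- Test functions for the weak formulation on T³ × [0,T):
C¹, periodic in x, compactly supported in time in [0,T). -/
def TestFun (T : ℝ) (φ : Vec3 → ℝ → ℝ) : Prop :=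
  ContDiff ℝ 1 (fun p : Vec3 × ℝ => φ p.1 p.2) ∧ PeriodicX φ ∧
  ∃ T' : ℝ, T' < T ∧ ∀ (x : Vec3) (t : ℝ), T' ≤ t → φ x t = 0

/-- The elastic stress Σ_{iα} of the augmented constitutive theory. -/
def SigmaA (ψ : Xi → ℝ → ℝ) (ξ : Xi) (θ : ℝ) (i α : Fin 3) : ℝ :=
  ∑ B : Idx, dXi B ψ ξ θ * dPhi B i α ξ.1

/-! Write `D(x, y)` for the Bregman divergence of `ψ̂` from `x` to `y`: the error at `y` of its
first-order Taylor expansion at `x`. Passing from `(ξ̄, θ̄)` first to `(ξ, θ̄)` and then to `(ξ, θ)`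
splits the relative entropy into `D((ξ̄, θ̄), (ξ, θ̄))`, which is controlled by convexity in `ξ`,
plus `-D((ξ, θ), (ξ, θ̄))`, which is controlled by concavity in `θ`, plus the kinetic term. On a
bounded set of states away from zero temperature the second derivatives are uniformly definite, and
both divergences are bounded below by a square; for small `θ` monotonicity of the divergence along a
segment replaces the uniform bound.

For large states one writes instead `I = ê(ξ, θ) - θ̄ η̂(ξ, θ) - a(ξ) + ½ |v - v̄|²` with `a`
affine. The energy `ê` grows like the weight `|ξ|_{p,q,r} + θ ^ ℓ`, the entropy `η̂` is of smaller
order, and so is `a` because the exponents exceed one; hence the energy and the kinetic term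
dominate. -/

lemma exists_forall_le_mul_rpow_add {a ε : ℝ} (ha : 1 < a) (hε : 0 < ε) :
    ∃ C, ∀ x, 0 ≤ x → x ≤ ε * x ^ a + C := by
  obtain ⟨B, hB⟩ :=
    ((_root_.tendsto_rpow_atTop (sub_pos.2 ha)).eventually_ge_atTop ε⁻¹).exists_forall_of_atTop
  refine ⟨max B 0, fun x hx ↦ ?_⟩
  rcases le_or_gt x (max B 0) with hsmall | hlarge
  · have : 0 ≤ ε * x ^ a := by positivity
    linarith
  · have hx₀ : 0 < x := (le_max_right B 0).trans_lt hlarge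
    calc x = ε * (ε⁻¹ * x) := by field_simp
      _ ≤ ε * (x ^ (a - 1) * x) := by
        gcongr
        exact hB x ((le_max_left B 0).trans hlarge.le)
      _ = ε * x ^ a := by rw [← Real.rpow_add_one hx₀.ne', sub_add_cancel]
      _ ≤ ε * x ^ a + max B 0 := le_add_of_nonneg_right (le_max_right B 0)

lemma quarter_sq_norm_sub_le_half_sq_norm_sub {V : Type*} [SeminormedAddCommGroup V] (v : V)
    {w : V} {M : ℝ} (hw : ‖w‖ ≤ M) : 1 / 4 * ‖v‖ ^ 2 - M ^ 2 / 2 ≤ 1 / 2 * ‖v - w‖ ^ 2 := by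
  have hv : ‖v‖ ≤ ‖v - w‖ + M := (norm_le_norm_sub_add v w).trans (by gcongr)
  nlinarith [sq_nonneg (‖v - w‖ - M), pow_le_pow_left₀ (norm_nonneg v) hv 2]

lemma hasFDerivAt_fderiv_apply {G H : Type*} [NormedAddCommGroup G] [NormedSpace ℝ G]
    [NormedAddCommGroup H] [NormedSpace ℝ H] {f : G → H} {x : G}
    (hf : DifferentiableAt ℝ (fderiv ℝ f) x) (w : G) :
    HasFDerivAt (fun y ↦ fderiv ℝ f y w) ((fderiv ℝ (fderiv ℝ f) x).flip w) x :=
  (hf.hasFDerivAt.clm_apply (hasFDerivAt_const w x)).congr_fderiv (by ext; simp)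

section Bregman

lemma mul_sq_le_taylor_remainder_of_le_deriv2 {φ φ' φ'' : ℝ → ℝ} {a b m : ℝ} (hab : a < b)
    (hφ : ∀ t ∈ Icc a b, HasDerivAt φ (φ' t) t) (hφ' : ∀ t ∈ Icc a b, HasDerivAt φ' (φ'' t) t)
    (hm : ∀ t ∈ Icc a b, m ≤ φ'' t) :
    m / 2 * (b - a) ^ 2 ≤ φ b - φ a - φ' a * (b - a) := by
  have hg : ∀ t ∈ Icc a b,
      HasDerivAt (fun t ↦ φ t - m / 2 * (t - a) ^ 2) (φ' t - m * (t - a)) t := fun t ht ↦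
    ((hφ t ht).fun_sub ((((hasDerivAt_id' t).sub_const a).fun_pow 2).const_mul
      (m / 2))).congr_deriv (by norm_num; ring)
  have hg' : ∀ t ∈ Icc a b, HasDerivAt (fun t ↦ φ' t - m * (t - a)) (φ'' t - m) t :=
    fun t ht ↦ by simpa using (hφ' t ht).fun_sub (((hasDerivAt_id' t).sub_const a).const_mul m)
  have hconvex : ConvexOn ℝ (Icc a b) fun t ↦ φ t - m / 2 * (t - a) ^ 2 :=
    convexOn_of_hasDerivWithinAt2_nonneg (convex_Icc a b)
      (fun t ht ↦ (hg t ht).continuousAt.continuousWithinAt)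
      (fun t ht ↦ (hg t (interior_subset ht)).hasDerivWithinAt)
      (fun t ht ↦ (hg' t (interior_subset ht)).hasDerivWithinAt)
      (fun t ht ↦ sub_nonneg.2 (hm t (interior_subset ht)))
  have hslope := hconvex.le_slope_of_hasDerivAt (left_mem_Icc.2 hab.le) (right_mem_Icc.2 hab.le)
    hab (hg a (left_mem_Icc.2 hab.le))
  rw [slope_def_field, le_div_iff₀ (sub_pos.2 hab)] at hslope
  linarith

variable {F G : Type*} [NormedAddCommGroup F] [NormedSpace ℝ F]
  [NormedAddCommGroup G] [NormedSpace ℝ G] {f : G → ℝ} {U K : Set G} {x y z : G}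

/-- The Bregman divergence of `f` from `x` to `y`: the error at `y` of the first-order Taylor
expansion of `f` at `x`. -/
def bregman (f : G → ℝ) (x y : G) : ℝ := f y - f x - fderiv ℝ f x (y - x)

lemma bregman_neg (f : G → ℝ) (x y : G) : bregman (-f) x y = -bregman f x y := by
  simp only [bregman, Pi.neg_apply, fderiv_neg, neg_apply]
  ring

lemma bregman_add_bregman_swap (f : G → ℝ) (x y : G) :
    bregman f x y + bregman f y x = (fderiv ℝ f y - fderiv ℝ f x) (y - x) := by
  simp only [bregman, sub_apply, map_sub]
  ring

lemma bregman_three_point (f : G → ℝ) (x y z : G) :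
    bregman f x y = bregman f x z + bregman f z y + (fderiv ℝ f z - fderiv ℝ f x) (y - z) := by
  simp only [bregman, sub_apply, map_sub]
  ring

lemma bregman_le_of_mem_segment (hxz : 0 ≤ bregman f x z) (hzx : 0 ≤ bregman f z x)
    (hz : z ∈ segment ℝ x y) : bregman f z y ≤ bregman f x y := by
  obtain ⟨t, ⟨ht₀, ht₁⟩, rfl⟩ := segment_eq_image' ℝ x y ▸ hz
  rcases ht₀.eq_or_lt with rfl | ht
  · simp
  set z := x + t • (y - x) with hz_def
  have hmono : 0 ≤ (fderiv ℝ f z - fderiv ℝ f x) (z - x) :=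
    bregman_add_bregman_swap f x z ▸ add_nonneg hxz hzx
  have hyz : y - z = ((1 - t) / t) • (z - x) := by
    rw [hz_def, add_sub_cancel_left, smul_smul, div_mul_cancel₀ _ ht.ne', sub_smul, one_smul]
    abel
  have hdir : 0 ≤ (fderiv ℝ f z - fderiv ℝ f x) (y - z) := by
    rw [hyz, map_smul]
    exact mul_nonneg (div_nonneg (sub_nonneg.2 ht₁) ht.le) hmono
  linarith [bregman_three_point f x y z]

lemma half_le_bregman_of_le_fderiv_fderiv (hU : IsOpen U) (hf : ContDiffOn ℝ 2 f U)
    (hxy : segment ℝ x y ⊆ U) {m : ℝ}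
    (hm : ∀ z ∈ segment ℝ x y, m ≤ fderiv ℝ (fderiv ℝ f) z (y - x) (y - x)) :
    m / 2 ≤ bregman f x y := by
  have hline : ∀ t ∈ Icc (0 : ℝ) 1, AffineMap.lineMap x y t ∈ segment ℝ x y := fun t ht ↦
    segment_eq_image_lineMap ℝ x y ▸ mem_image_of_mem _ ht
  have hf₁ : DifferentiableOn ℝ f U := hf.differentiableOn (by norm_num)
  have hf₂ : DifferentiableOn ℝ (fderiv ℝ f) U :=
    (hf.fderiv_of_isOpen (m := 1) hU (by norm_num)).differentiableOn (by norm_num)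
  have htaylor := mul_sq_le_taylor_remainder_of_le_deriv2 zero_lt_one
    (fun t ht ↦ (hf₁.differentiableAt (hU.mem_nhds (hxy (hline t ht)))).hasFDerivAt.comp_hasDerivAt
      t AffineMap.hasDerivAt_lineMap)
    (fun t ht ↦ ((hf₂.differentiableAt (hU.mem_nhds (hxy (hline t ht)))).hasFDerivAt.comp_hasDerivAt
      t AffineMap.hasDerivAt_lineMap).clm_apply (hasDerivAt_const t (y - x)))
    (fun t ht ↦ by simpa using hm _ (hline t ht))
  simpa [bregman] using htaylor

lemma exists_pos_mul_sq_norm_le_of_isCompact [FiniteDimensional ℝ F] {X : Type*}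
    [TopologicalSpace X] {K : Set X} (hK : IsCompact K) {Q : X → F → ℝ}
    (hQ : ContinuousOn (fun a : X × F ↦ Q a.1 a.2) (K ×ˢ univ))
    (hsmul : ∀ x ∈ K, ∀ (t : ℝ) (u : F), Q x (t • u) = t ^ 2 * Q x u)
    (hpos : ∀ x ∈ K, ∀ u ≠ 0, 0 < Q x u) :
    ∃ m > 0, ∀ x ∈ K, ∀ u, m * ‖u‖ ^ 2 ≤ Q x u := by
  have := FiniteDimensional.proper ℝ F
  obtain ⟨m, hm, hmQ⟩ := (hK.prod (isCompact_sphere (0 : F) 1)).exists_forall_le' (a := 0)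
    (hQ.mono (prod_mono_right (subset_univ _)))
    (fun a ha ↦ hpos a.1 ha.1 a.2 (ne_zero_of_mem_unit_sphere ⟨a.2, ha.2⟩))
  refine ⟨m, hm, fun x hx u ↦ ?_⟩
  rcases eq_or_ne u 0 with rfl | hu
  · simpa using (hsmul x hx 0 0).ge
  · have hunit : m ≤ Q x (‖u‖⁻¹ • u) := hmQ (x, ‖u‖⁻¹ • u) ⟨hx, by simp [norm_smul, hu]⟩
    calc m * ‖u‖ ^ 2 ≤ Q x (‖u‖⁻¹ • u) * ‖u‖ ^ 2 := by gcongr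
      _ = Q x u := by
        have : ‖u‖ ≠ 0 := norm_ne_zero_iff.2 hu
        rw [hsmul x hx]
        field_simp

lemma exists_pos_mul_sq_norm_le_bregman [FiniteDimensional ℝ F] (hU : IsOpen U)
    (hf : ContDiffOn ℝ 2 f U) (hK : IsCompact K) (hKconv : Convex ℝ K) (hKU : K ⊆ U) (ι : F →L[ℝ] G)
    (hpos : ∀ x ∈ K, ∀ u ≠ 0, 0 < fderiv ℝ (fderiv ℝ f) x (ι u) (ι u)) :
    ∃ m > 0, ∀ x ∈ K, ∀ u, x + ι u ∈ K → m * ‖u‖ ^ 2 ≤ bregman f x (x + ι u) := by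
  have hcont : ContinuousOn (fderiv ℝ (fderiv ℝ f)) K :=
    ((hf.fderiv_of_isOpen (m := 1) hU (by norm_num)).continuousOn_fderiv_of_isOpen hU
      (by norm_num)).mono hKU
  obtain ⟨m, hm, hmK⟩ := exists_pos_mul_sq_norm_le_of_isCompact hK
    (Q := fun x u ↦ fderiv ℝ (fderiv ℝ f) x (ι u) (ι u))
    (((hcont.comp continuousOn_fst fun _ ha ↦ ha.1).clm_apply (by fun_prop)).clm_apply
      (by fun_prop))
    (fun x _ t u ↦ by simp [sq, mul_assoc]) hpos
  refine ⟨m / 2, half_pos hm, fun x hx u hu ↦ ?_⟩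
  have hseg := hKconv.segment_subset hx hu
  calc m / 2 * ‖u‖ ^ 2 = m * ‖u‖ ^ 2 / 2 := by ring
    _ ≤ bregman f x (x + ι u) :=
      half_le_bregman_of_le_fderiv_fderiv hU hf (hseg.trans hKU) fun z hz ↦ by
        simpa using hmK z (hseg hz) u

end Bregman

section RelativeEntropy

variable {E V : Type*}

/-- The states `(ξ, θ)` of positive temperature. -/
def stateDomain (E : Type*) : Set (E × ℝ) := univ ×ˢ Ioi 0

lemma mem_stateDomain {ξ : E} {θ : ℝ} (hθ : 0 < θ) : (ξ, θ) ∈ stateDomain E := ⟨mem_univ ξ, hθ⟩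

variable [NormedAddCommGroup E]

/-- The bounded states whose temperature stays away from zero; it plays the role of the set
`Γ_{M,δ}` for an arbitrary norm on the space of the variable `ξ`. -/
def stateSlab (E : Type*) [NormedAddCommGroup E] (ρ δ : ℝ) : Set (E × ℝ) :=
  {x | ‖x‖ ≤ ρ ∧ δ ≤ x.2}

lemma isOpen_stateDomain : IsOpen (stateDomain E) := isOpen_univ.prod isOpen_Ioi

lemma stateSlab_subset_stateDomain {ρ δ : ℝ} (hδ : 0 < δ) : stateSlab E ρ δ ⊆ stateDomain E :=
  fun _ hx ↦ mem_stateDomain (hδ.trans_le hx.2)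

lemma stateSlab_eq (E : Type*) [NormedAddCommGroup E] (ρ δ : ℝ) :
    stateSlab E ρ δ = Metric.closedBall 0 ρ ∩ Prod.snd ⁻¹' Ici δ := by
  ext x
  simp [stateSlab]

variable [NormedSpace ℝ E] [SeminormedAddCommGroup V] {f W : E × ℝ → ℝ} {x y : E × ℝ} {ρ δ : ℝ}

lemma convex_stateSlab : Convex ℝ (stateSlab E ρ δ) :=
  stateSlab_eq E ρ δ ▸
    (convex_closedBall 0 ρ).inter ((convex_Ici δ).linear_preimage (LinearMap.snd ℝ E ℝ))

lemma isCompact_stateSlab [FiniteDimensional ℝ E] : IsCompact (stateSlab E ρ δ) :=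
  have := FiniteDimensional.proper ℝ (E × ℝ)
  stateSlab_eq E ρ δ ▸ (isCompact_closedBall 0 ρ).inter_right (isClosed_Ici.preimage continuous_snd)

/-- The entropy `η = -∂_θ f` of the free energy `f`. -/
def entropyOf (f : E × ℝ → ℝ) (x : E × ℝ) : ℝ := -fderiv ℝ f x (0, 1)

/-- The internal energy `e = f + θ η` of the free energy `f`. -/
def internalEnergyOf (f : E × ℝ → ℝ) (x : E × ℝ) : ℝ := f x + x.2 * entropyOf f x

/-- The entropy of the state `x` with velocity `v` relative to the state `y` with velocity `w`,
for the free energy `f`. -/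
def relativeEntropyOf (f : E × ℝ → ℝ) (x : E × ℝ) (v : V) (y : E × ℝ) (w : V) : ℝ :=
  bregman f y x + 1 / 2 * ‖v - w‖ ^ 2 + (entropyOf f x - entropyOf f y) * (x.2 - y.2)

/-- Thermodynamic stability of a free energy: it is strictly convex in `ξ` and strictly concave in
`θ`, in the nondegenerate sense of second derivatives. -/
structure IsThermodynamicallyStable (f : E × ℝ → ℝ) : Prop where
  contDiffOn : ContDiffOn ℝ 2 f (stateDomain E)
  hessian_pos : ∀ x ∈ stateDomain E, ∀ u : E, u ≠ 0 →
    0 < fderiv ℝ (fderiv ℝ f) x (u, 0) (u, 0)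
  deriv_entropy_pos : ∀ x ∈ stateDomain E, 0 < -fderiv ℝ (fderiv ℝ f) x (0, 1) (0, 1)

/-- A nonnegative weight which dominates every multiple of the norm on `s`, up to a constant. -/
structure IsSuperlinearOn {G : Type*} [NormedAddCommGroup G] (W : G → ℝ) (s : Set G) : Prop where
  nonneg : ∀ x ∈ s, 0 ≤ W x
  exists_norm_le : ∀ ε > 0, ∃ C, ∀ x ∈ s, ‖x‖ ≤ ε * W x + C

lemma fderiv_apply_zero_left (f : E × ℝ → ℝ) (x : E × ℝ) (s : ℝ) :
    fderiv ℝ f x (0, s) = -(s * entropyOf f x) := by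
  rw [entropyOf, mul_neg, neg_neg, ← smul_eq_mul, ← map_smul]
  simp

lemma relativeEntropyOf_eq_bregman_sub_bregman (f : E × ℝ → ℝ) (x : E × ℝ) (v : V) (y : E × ℝ)
    (w : V) : relativeEntropyOf f x v y w =
      bregman f y (x.1, y.2) - bregman f x (x.1, y.2) + 1 / 2 * ‖v - w‖ ^ 2 := by
  have hx : (x.1, y.2) - x = (0, y.2 - x.2) := by ext <;> simp
  have hy : x - y = ((x.1, y.2) - y) + (0, x.2 - y.2) := by ext <;> simp
  rw [relativeEntropyOf, bregman, bregman, bregman, hx, hy, map_add, fderiv_apply_zero_left,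
    fderiv_apply_zero_left]
  ring

lemma relativeEntropyOf_eq_internalEnergyOf (f : E × ℝ → ℝ) (x : E × ℝ) (v : V) (y : E × ℝ)
    (w : V) : relativeEntropyOf f x v y w =
      internalEnergyOf f x - y.2 * entropyOf f x - f y - fderiv ℝ f y (x.1 - y.1, 0)
        + 1 / 2 * ‖v - w‖ ^ 2 := by
  have hx : x - y = (x.1 - y.1, 0) + (0, x.2 - y.2) := by ext <;> simp
  rw [relativeEntropyOf, bregman, internalEnergyOf, hx, map_add, fderiv_apply_zero_left]
  ring

namespace IsThermodynamicallyStable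

lemma hessian_neg_pos (hf : IsThermodynamicallyStable f) (hx : x ∈ stateDomain E) {s : ℝ}
    (hs : s ≠ 0) : 0 < fderiv ℝ (fderiv ℝ (-f)) x (0, s) (0, s) := by
  have hsmul : ((0, s) : E × ℝ) = s • (0, 1) := by simp
  have hneg : fderiv ℝ (-f) = -fderiv ℝ f := funext fun _ ↦ fderiv_neg
  rw [hneg, fderiv_neg, hsmul]
  simp only [map_smul, neg_apply, smul_apply, smul_eq_mul]
  have := mul_pos (sq_pos_of_ne_zero hs) (hf.deriv_entropy_pos x hx)
  linarith

lemma bregman_neg_nonneg (hf : IsThermodynamicallyStable f) (ξ : E) {s t : ℝ} (hs : 0 < s)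
    (ht : 0 < t) : 0 ≤ bregman (-f) (ξ, s) (ξ, t) := by
  have hseg : segment ℝ (ξ, s) (ξ, t) ⊆ stateDomain E :=
    (convex_univ.prod (convex_Ioi 0)).segment_subset (mem_stateDomain hs) (mem_stateDomain ht)
  rcases eq_or_ne t s with rfl | hst
  · simp [bregman]
  · simpa using half_le_bregman_of_le_fderiv_fderiv (f := -f) isOpen_stateDomain
      hf.contDiffOn.neg hseg (m := 0) fun z hz ↦ by
        simpa using (hf.hessian_neg_pos (hseg hz) (sub_ne_zero.2 hst)).le

lemma entropyOf_mono (hf : IsThermodynamicallyStable f) (ξ : E) {s t : ℝ} (hs : 0 < s)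
    (hst : s ≤ t) : entropyOf f (ξ, s) ≤ entropyOf f (ξ, t) := by
  rcases hst.eq_or_lt with rfl | hlt
  · rfl
  have hsum := add_nonneg (hf.bregman_neg_nonneg ξ hs (hs.trans hlt))
    (hf.bregman_neg_nonneg ξ (hs.trans hlt) hs)
  have hmul : 0 ≤ (t - s) * (entropyOf f (ξ, t) - entropyOf f (ξ, s)) := by
    rw [bregman_add_bregman_swap, fderiv_neg, fderiv_neg, Prod.mk_sub_mk, sub_self] at hsum
    simp only [sub_apply, neg_apply, fderiv_apply_zero_left] at hsum
    linarith
  exact sub_nonneg.1 (nonneg_of_mul_nonneg_right hmul (sub_pos.2 hlt))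

lemma exists_pos_mul_sq_le_bregman_fst [FiniteDimensional ℝ E] (hf : IsThermodynamicallyStable f)
    (ρ : ℝ) (hδ : 0 < δ) : ∃ m > 0, ∀ (ξ ξ' : E) (θ : ℝ), (ξ, θ) ∈ stateSlab E ρ δ →
      (ξ', θ) ∈ stateSlab E ρ δ → m * ‖ξ' - ξ‖ ^ 2 ≤ bregman f (ξ, θ) (ξ', θ) := by
  have hslab := stateSlab_subset_stateDomain (E := E) (ρ := ρ) hδ
  obtain ⟨m, hm, hmle⟩ := exists_pos_mul_sq_norm_le_bregman isOpen_stateDomain hf.contDiffOn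
    isCompact_stateSlab convex_stateSlab hslab (.inl ℝ E ℝ)
    fun x hx u hu ↦ hf.hessian_pos x (hslab hx) u hu
  refine ⟨m, hm, fun ξ ξ' θ hξ hξ' ↦ ?_⟩
  have hadd : (ξ, θ) + ContinuousLinearMap.inl ℝ E ℝ (ξ' - ξ) = (ξ', θ) := by simp
  simpa only [hadd] using hmle (ξ, θ) hξ (ξ' - ξ) (hadd ▸ hξ')

lemma exists_pos_mul_sq_le_bregman_neg_of_mem_stateSlab [FiniteDimensional ℝ E]
    (hf : IsThermodynamicallyStable f) (ρ : ℝ) (hδ : 0 < δ) :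
    ∃ m > 0, ∀ (ξ : E) (s t : ℝ), (ξ, s) ∈ stateSlab E ρ δ → (ξ, t) ∈ stateSlab E ρ δ →
      m * (t - s) ^ 2 ≤ bregman (-f) (ξ, s) (ξ, t) := by
  have hslab := stateSlab_subset_stateDomain (E := E) (ρ := ρ) hδ
  obtain ⟨m, hm, hmle⟩ := exists_pos_mul_sq_norm_le_bregman (f := -f) isOpen_stateDomain
    hf.contDiffOn.neg isCompact_stateSlab convex_stateSlab hslab (.inr ℝ E ℝ)
    fun x hx s hs ↦ hf.hessian_neg_pos (hslab hx) hs
  refine ⟨m, hm, fun ξ s t hs ht ↦ ?_⟩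
  have hadd : (ξ, s) + ContinuousLinearMap.inr ℝ E ℝ (t - s) = (ξ, t) := by simp
  simpa only [hadd, Real.norm_eq_abs, sq_abs] using hmle (ξ, s) hs (t - s) (hadd ▸ ht)

lemma exists_pos_mul_sq_le_bregman_neg [FiniteDimensional ℝ E]
    (hf : IsThermodynamicallyStable f) (ρ : ℝ) (hδ : 0 < δ) :
    ∃ m > 0, ∀ (ξ : E) (s t : ℝ), 0 < s → ‖(ξ, s)‖ ≤ ρ → (ξ, t) ∈ stateSlab E ρ δ →
      m * (t - s) ^ 2 ≤ bregman (-f) (ξ, s) (ξ, t) := by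
  obtain ⟨m, hm, hmle⟩ := hf.exists_pos_mul_sq_le_bregman_neg_of_mem_stateSlab ρ (half_pos hδ)
  refine ⟨m / 4, by positivity, fun ξ s t hs hρ ht ↦ ?_⟩
  have hδt : δ ≤ t := ht.2
  have ht' : (ξ, t) ∈ stateSlab E ρ (δ / 2) := ⟨ht.1, by linarith⟩
  rcases le_total (δ / 2) s with hδs | hsδ
  · have := hmle ξ s t ⟨hρ, hδs⟩ ht'
    have : 0 ≤ m * (t - s) ^ 2 := by positivity
    linarith
  -- Below the temperature `δ / 2` the second derivative may degenerate; by concavity the divergence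
  -- only decreases when the base point moves up to `δ / 2`.
  have hmem : (ξ, δ / 2) ∈ segment ℝ (ξ, s) (ξ, t) := by
    rw [← Prod.image_mk_segment_right, segment_eq_Icc (by linarith)]
    exact mem_image_of_mem _ ⟨hsδ, by linarith⟩
  have hmid : (ξ, δ / 2) ∈ stateSlab E ρ (δ / 2) :=
    ⟨mem_closedBall_zero_iff.1 ((convex_closedBall (0 : E × ℝ) ρ).segment_subset
      (mem_closedBall_zero_iff.2 hρ) (mem_closedBall_zero_iff.2 ht.1) hmem), le_rfl⟩
  calc m / 4 * (t - s) ^ 2 ≤ m / 4 * (2 * (t - δ / 2)) ^ 2 := by gcongr <;> linarith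
    _ = m * (t - δ / 2) ^ 2 := by ring
    _ ≤ bregman (-f) (ξ, δ / 2) (ξ, t) := hmle ξ (δ / 2) t hmid ht'
    _ ≤ bregman (-f) (ξ, s) (ξ, t) :=
      bregman_le_of_mem_segment (hf.bregman_neg_nonneg ξ hs (half_pos hδ))
        (hf.bregman_neg_nonneg ξ (half_pos hδ) hs) hmem

lemma exists_pos_mul_dist_sq_le_relativeEntropyOf [FiniteDimensional ℝ E]
    (hf : IsThermodynamicallyStable f) (ρ : ℝ) (hδ : 0 < δ) :
    ∃ K > 0, ∀ x ∈ stateDomain E, ‖x‖ ≤ ρ → ∀ y ∈ stateSlab E ρ δ, ∀ v w : V,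
      K * (‖x.1 - y.1‖ ^ 2 + (x.2 - y.2) ^ 2 + ‖v - w‖ ^ 2) ≤ relativeEntropyOf f x v y w := by
  obtain ⟨m, hm, hmle⟩ := hf.exists_pos_mul_sq_le_bregman_fst ρ hδ
  obtain ⟨κ, hκ, hκle⟩ := hf.exists_pos_mul_sq_le_bregman_neg ρ hδ
  refine ⟨min m (min κ (1 / 2)), by positivity, fun x hx hxρ y hy v w ↦ ?_⟩
  have hcorner : (x.1, y.2) ∈ stateSlab E ρ δ :=
    ⟨max_le ((norm_fst_le x).trans hxρ) ((norm_snd_le y).trans hy.1), hy.2⟩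
  have hξ := hmle y.1 x.1 y.2 hy hcorner
  have hθ := hκle x.1 x.2 y.2 hx.2 hxρ hcorner
  rw [bregman_neg] at hθ
  calc min m (min κ (1 / 2)) * (‖x.1 - y.1‖ ^ 2 + (x.2 - y.2) ^ 2 + ‖v - w‖ ^ 2)
      = min m (min κ (1 / 2)) * ‖x.1 - y.1‖ ^ 2 + min m (min κ (1 / 2)) * (y.2 - x.2) ^ 2
        + min m (min κ (1 / 2)) * ‖v - w‖ ^ 2 := by ring
    _ ≤ m * ‖x.1 - y.1‖ ^ 2 + κ * (y.2 - x.2) ^ 2 + 1 / 2 * ‖v - w‖ ^ 2 := by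
      gcongr <;> simp
    _ ≤ relativeEntropyOf f x v y w := by
      rw [relativeEntropyOf_eq_bregman_sub_bregman]
      linarith

lemma exists_entropyOf_le [FiniteDimensional ℝ E] (hf : IsThermodynamicallyStable f)
    (hW : IsSuperlinearOn W (stateDomain E))
    (hη : ∀ ε > 0, ∃ R, ∀ x ∈ stateDomain E, R < W x → entropyOf f x ≤ ε * W x)
    {ε : ℝ} (hε : 0 < ε) :
    ∃ C ≥ 0, ∀ x ∈ stateDomain E, entropyOf f x ≤ ε * W x + C := by
  obtain ⟨R, hR⟩ := hη ε hε
  obtain ⟨C, hC⟩ := hW.exists_norm_le 1 one_pos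
  have hcont : ContinuousOn (entropyOf f) (stateSlab E (max (R + C) 1) 1) :=
    (((hf.contDiffOn.continuousOn_fderiv_of_isOpen isOpen_stateDomain (by norm_num)).mono
      (stateSlab_subset_stateDomain one_pos)).clm_apply continuousOn_const).neg
  obtain ⟨B, hB⟩ := isCompact_stateSlab.exists_bound_of_continuousOn hcont
  refine ⟨max B 0, le_max_right _ _, fun x hx ↦ ?_⟩
  have hWx : 0 ≤ ε * W x := mul_nonneg hε.le (hW.nonneg x hx)
  rcases lt_or_ge R (W x) with hlarge | hsmall
  · linarith [hR x hx hlarge, le_max_right B 0]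
  have hnorm : ‖x‖ ≤ R + C := by linarith [hC x hx]
  have hmem : (x.1, max x.2 1) ∈ stateSlab E (max (R + C) 1) 1 := by
    refine ⟨max_le ((norm_fst_le x).trans (hnorm.trans (le_max_left _ _))) ?_, le_max_right _ _⟩
    rw [Real.norm_of_nonneg (zero_le_one.trans (le_max_right _ _))]
    exact max_le_max_right 1 ((le_abs_self x.2).trans ((norm_snd_le x).trans hnorm))
  calc entropyOf f x ≤ entropyOf f (x.1, max x.2 1) := hf.entropyOf_mono x.1 hx.2 (le_max_left _ _)
    _ ≤ B := (le_abs_self _).trans (hB _ hmem)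
    _ ≤ ε * W x + max B 0 := by linarith [le_max_left B 0]

lemma exists_energy_sub_le_relativeEntropyOf [FiniteDimensional ℝ E]
    (hf : IsThermodynamicallyStable f) (hW : IsSuperlinearOn W (stateDomain E))
    (hη : ∀ ε > 0, ∃ R, ∀ x ∈ stateDomain E, R < W x → entropyOf f x ≤ ε * W x)
    (M : ℝ) (hδ : 0 < δ) {ε : ℝ} (hε : 0 < ε) :
    ∃ C, ∀ x ∈ stateDomain E, ∀ y ∈ stateSlab E M δ, ∀ v w : V, ‖w‖ ≤ M →
      internalEnergyOf f x - ε * W x + 1 / 4 * ‖v‖ ^ 2 - C ≤ relativeEntropyOf f x v y w := by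
  have hslab := stateSlab_subset_stateDomain (E := E) (ρ := M) hδ
  obtain ⟨A, hA⟩ := isCompact_stateSlab.exists_bound_of_continuousOn
    (hf.contDiffOn.continuousOn.mono hslab)
  obtain ⟨L, hL⟩ := isCompact_stateSlab.exists_bound_of_continuousOn
    ((hf.contDiffOn.continuousOn_fderiv_of_isOpen isOpen_stateDomain (by norm_num)).mono hslab)
  obtain ⟨α, hα, hMα⟩ := exists_pos_mul_lt (half_pos hε) M
  obtain ⟨β, hβ, hLβ⟩ := exists_pos_mul_lt (half_pos hε) L
  obtain ⟨B, hB₀, hB⟩ := hf.exists_entropyOf_le hW hη hα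
  obtain ⟨D, hD⟩ := hW.exists_norm_le β hβ
  refine ⟨M * B + A + L * (D + M) + M ^ 2 / 2, fun x hx y hy v w hw ↦ ?_⟩
  have hWx := hW.nonneg x hx
  have hentropy : y.2 * entropyOf f x ≤ ε / 2 * W x + M * B :=
    calc y.2 * entropyOf f x ≤ y.2 * (α * W x + B) :=
          mul_le_mul_of_nonneg_left (hB x hx) (hδ.le.trans hy.2)
      _ ≤ M * (α * W x + B) := by
          gcongr
          exact (le_abs_self y.2).trans ((norm_snd_le y).trans hy.1)
      _ = M * α * W x + M * B := by ring
      _ ≤ ε / 2 * W x + M * B := by gcongr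
  have hlinear : fderiv ℝ f y (x.1 - y.1, 0) ≤ ε / 2 * W x + L * (D + M) := by
    have hL₀ : 0 ≤ L := (norm_nonneg _).trans (hL y hy)
    have hdir : ‖((x.1 - y.1, 0) : E × ℝ)‖ ≤ β * W x + D + M :=
      calc ‖((x.1 - y.1, 0) : E × ℝ)‖ = ‖x.1 - y.1‖ := by simp
        _ ≤ ‖x.1‖ + ‖y.1‖ := norm_sub_le _ _
        _ ≤ β * W x + D + M := add_le_add ((norm_fst_le x).trans (hD x hx))
          ((norm_fst_le y).trans hy.1)
    calc fderiv ℝ f y (x.1 - y.1, 0) ≤ ‖fderiv ℝ f y‖ * ‖((x.1 - y.1, 0) : E × ℝ)‖ :=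
          (le_abs_self _).trans ((fderiv ℝ f y).le_opNorm _)
      _ ≤ L * (β * W x + D + M) := mul_le_mul (hL y hy) hdir (norm_nonneg _) hL₀
      _ = L * β * W x + L * (D + M) := by ring
      _ ≤ ε / 2 * W x + L * (D + M) := by gcongr
  have hkinetic := quarter_sq_norm_sub_le_half_sq_norm_sub v hw
  have hfy : f y ≤ A := (le_abs_self _).trans (hA y hy)
  rw [relativeEntropyOf_eq_internalEnergyOf]
  linarith

end IsThermodynamicallyStable

theorem coercivity_relative_entropy_general [FiniteDimensional ℝ E] {c c₀ : ℝ} (hc : 0 < c)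
    (hf : IsThermodynamicallyStable f) (hW : IsSuperlinearOn W (stateDomain E))
    (he : ∀ x ∈ stateDomain E, c * W x - c₀ ≤ internalEnergyOf f x)
    (hη : ∀ ε > 0, ∃ R, ∀ x ∈ stateDomain E, R < W x → entropyOf f x ≤ ε * W x)
    (M : ℝ) (hδ : 0 < δ) :
    ∃ R K₁ K₂ : ℝ, 0 < K₁ ∧ 0 < K₂ ∧
      ∀ x ∈ stateDomain E, ∀ y ∈ stateSlab E M δ, ∀ v w : V, ‖w‖ ≤ M →
        (R < W x + ‖v‖ ^ 2 → K₁ / 2 * (W x + ‖v‖ ^ 2) ≤ relativeEntropyOf f x v y w) ∧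
        (W x + ‖v‖ ^ 2 ≤ R →
          K₂ * (‖x.1 - y.1‖ ^ 2 + (x.2 - y.2) ^ 2 + ‖v - w‖ ^ 2)
            ≤ relativeEntropyOf f x v y w) := by
  obtain ⟨C, hC⟩ := hf.exists_energy_sub_le_relativeEntropyOf (V := V) hW hη M hδ (half_pos hc)
  obtain ⟨D, hD⟩ := hW.exists_norm_le 1 one_pos
  set K₁ := min (c / 2) (1 / 4) with hK₁_def
  set R := 2 * (c₀ + C) / K₁
  have hK₁ : 0 < K₁ := by positivity
  obtain ⟨K₂, hK₂, hlocal⟩ :=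
    hf.exists_pos_mul_dist_sq_le_relativeEntropyOf (V := V) (max (R + D) M) hδ
  refine ⟨R, K₁, K₂, hK₁, hK₂, fun x hx y hy v w hw ↦ ⟨fun hlarge ↦ ?_, fun hsmall ↦ ?_⟩⟩
  · have hWx := hW.nonneg x hx
    have hsplit : K₁ * (W x + ‖v‖ ^ 2) ≤ c / 2 * W x + 1 / 4 * ‖v‖ ^ 2 := by
      rw [mul_add]
      gcongr <;> simp [hK₁_def]
    have hconst : 2 * (c₀ + C) < (W x + ‖v‖ ^ 2) * K₁ := (div_lt_iff₀ hK₁).1 hlarge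
    linarith [hC x hx y hy v w hw, he x hx]
  · have hnorm : ‖x‖ ≤ R + D := by linarith [hD x hx, sq_nonneg ‖v‖]
    exact hlocal x hx (hnorm.trans (le_max_left _ _)) y ⟨hy.1.trans (le_max_right _ _), hy.2⟩ v w

end RelativeEntropy

section Coordinates

variable {ψ : Xi → ℝ → ℝ} {ξ ξ' : Xi} {θ θ' : ℝ}

/-- The standard basis of the space `ℝ¹⁹` of the variables `ξ = (F, ζ, w)`; its coordinates are the
components `xiComp`. -/
def xiBasis : Module.Basis Idx ℝ Xi :=
  .ofEquivFun
    { toFun := xiComp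
      invFun := fun u ↦
        (fun i α ↦ u (.inl (i, α)), fun i α ↦ u (.inr (.inl (i, α))), u (.inr (.inr ())))
      map_add' := fun _ _ ↦ by ext (_ | _ | _) <;> rfl
      map_smul' := fun _ _ ↦ by ext (_ | _ | _) <;> rfl
      left_inv := fun _ ↦ rfl
      right_inv := fun _ ↦ by ext (_ | _ | _) <;> rfl }

lemma xiBasis_equivFun (ξ : Xi) : xiBasis.equivFun ξ = xiComp ξ := by
  simp only [xiBasis, Module.Basis.equivFun_ofEquivFun]
  rfl

lemma xiComp_xiUpd (ξ : Xi) (B : Idx) (s : ℝ) :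
    xiComp (xiUpd ξ B s) = Function.update (xiComp ξ) B s := by
  rcases B with ⟨i, α⟩ | ⟨i, α⟩ | u <;> ext (⟨j, β⟩ | ⟨j, β⟩ | u') <;>
    simp [xiComp, xiUpd, updMat, Function.update_apply, ite_apply] <;> grind

lemma xiUpd_eq_add_smul (ξ : Xi) (B : Idx) (s : ℝ) :
    xiUpd ξ B s = ξ + (s - xiComp ξ B) • xiBasis B := by
  refine xiBasis.equivFun.injective ?_
  ext A
  rw [map_add, map_smul, Pi.add_apply, Pi.smul_apply, xiBasis.equivFun_self, xiBasis_equivFun,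
    xiBasis_equivFun, xiComp_xiUpd]
  rcases eq_or_ne A B with rfl | h
  · simp
  · simp [h, h.symm]

lemma hasDerivAt_xiUpd (ξ : Xi) (B : Idx) (s : ℝ) : HasDerivAt (xiUpd ξ B) (xiBasis B) s := by
  rw [funext (xiUpd_eq_add_smul ξ B)]
  simpa using (((hasDerivAt_id s).sub_const (xiComp ξ B)).smul_const (xiBasis B)).const_add ξ

lemma map_eq_sum_xiComp {G : Type*} [NormedAddCommGroup G] [NormedSpace ℝ G]
    (L : Xi × ℝ →L[ℝ] G) (u : Xi) : L (u, 0) = ∑ B, xiComp u B • L (xiBasis B, 0) := by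
  have hsum := congrArg (L ∘L .inl ℝ Xi ℝ) (xiBasis.sum_equivFun u)
  simp only [map_sum, map_smul, xiBasis_equivFun] at hsum
  exact hsum.symm

lemma dXi_eq_fderiv (hψ : DifferentiableAt ℝ (Function.uncurry ψ) (ξ, θ)) (B : Idx) :
    dXi B ψ ξ θ = fderiv ℝ (Function.uncurry ψ) (ξ, θ) (xiBasis B, 0) := by
  have hself : xiUpd ξ B (xiComp ξ B) = ξ := by simp [xiUpd_eq_add_smul]
  exact (hψ.hasFDerivAt.comp_hasDerivAt_of_eq (xiComp ξ B)
    ((hasDerivAt_xiUpd ξ B _).prodMk (hasDerivAt_const _ θ)) (by rw [hself])).deriv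

lemma dTh_eq_fderiv (hψ : DifferentiableAt ℝ (Function.uncurry ψ) (ξ, θ)) :
    dTh ψ ξ θ = fderiv ℝ (Function.uncurry ψ) (ξ, θ) (0, 1) :=
  (hψ.hasFDerivAt.comp_hasDerivAt θ ((hasDerivAt_const θ ξ).prodMk (hasDerivAt_id θ))).deriv

lemma etaHat_eq_entropyOf (hψ : DifferentiableAt ℝ (Function.uncurry ψ) (ξ, θ)) :
    etaHat ψ ξ θ = entropyOf (Function.uncurry ψ) (ξ, θ) := by
  rw [etaHat, dTh_eq_fderiv hψ, entropyOf]

lemma eHat_eq_internalEnergyOf (hψ : DifferentiableAt ℝ (Function.uncurry ψ) (ξ, θ)) :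
    eHat ψ ξ θ = internalEnergyOf (Function.uncurry ψ) (ξ, θ) := by
  rw [eHat, dTh_eq_fderiv hψ, internalEnergyOf, entropyOf, mul_neg, ← sub_eq_add_neg]
  rfl

lemma dXi_dXi_eq_fderiv_fderiv
    (hψ : ∀ᶠ x in 𝓝 (ξ, θ), DifferentiableAt ℝ (Function.uncurry ψ) x)
    (hψ' : DifferentiableAt ℝ (fderiv ℝ (Function.uncurry ψ)) (ξ, θ)) (A B : Idx) :
    dXi A (dXi B ψ) ξ θ =
      fderiv ℝ (fderiv ℝ (Function.uncurry ψ)) (ξ, θ) (xiBasis A, 0) (xiBasis B, 0) := by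
  have hderiv := (hasFDerivAt_fderiv_apply hψ' (xiBasis B, 0)).congr_of_eventuallyEq
    (hψ.mono fun x hx ↦ dXi_eq_fderiv hx B : Function.uncurry (dXi B ψ) =ᶠ[𝓝 (ξ, θ)] _)
  rw [dXi_eq_fderiv hderiv.differentiableAt, hderiv.fderiv]
  rfl

lemma dTh_etaHat_eq_fderiv_fderiv
    (hψ : ∀ᶠ x in 𝓝 (ξ, θ), DifferentiableAt ℝ (Function.uncurry ψ) x)
    (hψ' : DifferentiableAt ℝ (fderiv ℝ (Function.uncurry ψ)) (ξ, θ)) :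
    dTh (etaHat ψ) ξ θ = -fderiv ℝ (fderiv ℝ (Function.uncurry ψ)) (ξ, θ) (0, 1) (0, 1) := by
  have hderiv := (hasFDerivAt_fderiv_apply hψ' (0, 1)).fun_neg.congr_of_eventuallyEq
    (hψ.mono fun x hx ↦ etaHat_eq_entropyOf hx : Function.uncurry (etaHat ψ) =ᶠ[𝓝 (ξ, θ)] _)
  rw [dTh_eq_fderiv hderiv.differentiableAt, hderiv.fderiv]
  rfl

lemma differentiableAt_uncurry (hψ : ContDiffOn ℝ 1 (Function.uncurry ψ) (stateDomain Xi)) :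
    ∀ x ∈ stateDomain Xi, DifferentiableAt ℝ (Function.uncurry ψ) x :=
  fun _ hx ↦ (hψ.differentiableOn (by norm_num)).differentiableAt (isOpen_stateDomain.mem_nhds hx)

lemma isThermodynamicallyStable_uncurry
    (hψ : ContDiffOn ℝ 2 (Function.uncurry ψ) (stateDomain Xi)) (hconv : PsiConvex ψ) :
    IsThermodynamicallyStable (Function.uncurry ψ) := by
  have hdiff : ∀ x ∈ stateDomain Xi,
      ∀ᶠ y in 𝓝 x, DifferentiableAt ℝ (Function.uncurry ψ) y := fun x hx ↦
    (isOpen_stateDomain.eventually_mem hx).mono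
      (differentiableAt_uncurry (hψ.of_le (by norm_num)))
  have hdiff' : ∀ x ∈ stateDomain Xi,
      DifferentiableAt ℝ (fderiv ℝ (Function.uncurry ψ)) x := fun x hx ↦
    ((hψ.fderiv_of_isOpen (m := 1) isOpen_stateDomain (by norm_num)).differentiableOn
      (by norm_num)).differentiableAt (isOpen_stateDomain.mem_nhds hx)
  refine ⟨hψ, fun x hx u hu ↦ ?_, fun x hx ↦ ?_⟩
  · have hu' : xiComp u ≠ 0 := by
      rwa [← xiBasis_equivFun, Ne, LinearEquiv.map_eq_zero_iff]
    refine ((hconv x.1 x.2 hx.2).1 (xiComp u) hu').trans_eq ?_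
    rw [map_eq_sum_xiComp (fderiv ℝ (fderiv ℝ (Function.uncurry ψ)) x), sum_apply]
    refine Finset.sum_congr rfl fun A _ ↦ ?_
    rw [smul_apply, map_eq_sum_xiComp, Finset.smul_sum]
    refine Finset.sum_congr rfl fun B _ ↦ ?_
    rw [dXi_dXi_eq_fderiv_fderiv (hdiff x hx) (hdiff' x hx), smul_eq_mul, smul_eq_mul]
    ring
  · exact (hconv x.1 x.2 hx.2).2.trans_eq
      (dTh_etaHat_eq_fderiv_fderiv (hdiff x hx) (hdiff' x hx))

lemma vnorm_eq_norm_toLp (v : Vec3) : vnorm v = ‖WithLp.toLp 2 v‖ := by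
  simp [vnorm, EuclideanSpace.norm_eq]

lemma relEnt_eq_relativeEntropyOf (hψ : DifferentiableAt ℝ (Function.uncurry ψ) (ξ, θ))
    (hψ' : DifferentiableAt ℝ (Function.uncurry ψ) (ξ', θ')) (v v' : Vec3) :
    relEnt ψ ξ v θ ξ' v' θ' = relativeEntropyOf (Function.uncurry ψ) (ξ, θ) (WithLp.toLp 2 v)
      (ξ', θ') (WithLp.toLp 2 v') := by
  have hsub : (ξ, θ) - (ξ', θ') = (ξ - ξ', 0) + (0, θ - θ') := by simp
  have hcomp : ∀ B, xiComp (ξ - ξ') B = xiComp ξ B - xiComp ξ' B := fun B ↦ by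
    simp only [← xiBasis_equivFun, map_sub, Pi.sub_apply]
  have hψrel : psiRel ψ ξ θ ξ' θ' = bregman (Function.uncurry ψ) (ξ', θ') (ξ, θ) := by
    rw [bregman, hsub, map_add, fderiv_apply_zero_left, map_eq_sum_xiComp, psiRel,
      etaHat_eq_entropyOf hψ']
    simp only [hcomp, dXi_eq_fderiv hψ', smul_eq_mul, Function.uncurry_apply_pair, mul_comm]
    ring
  rw [relEnt, relativeEntropyOf, hψrel, etaHat_eq_entropyOf hψ, etaHat_eq_entropyOf hψ',
    EuclideanSpace.real_norm_sq_eq]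
  rfl

lemma norm_le_mnorm (F : Mat3) : ‖F‖ ≤ mnorm F := by
  have h₀ : 0 ≤ mnorm F := Real.sqrt_nonneg _
  refine (pi_norm_le_iff_of_nonneg h₀).2 fun i ↦ (pi_norm_le_iff_of_nonneg h₀).2 fun j ↦ ?_
  refine Real.abs_le_sqrt ?_
  calc F i j ^ 2 ≤ ∑ j, F i j ^ 2 :=
        Finset.single_le_sum (fun _ _ ↦ sq_nonneg _) (Finset.mem_univ j)
    _ ≤ ∑ i, ∑ j, F i j ^ 2 := Finset.single_le_sum (f := fun i ↦ ∑ j, F i j ^ 2)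
        (fun _ _ ↦ Finset.sum_nonneg fun _ _ ↦ sq_nonneg _) (Finset.mem_univ i)

lemma mnorm_sq_le (F : Mat3) : mnorm F ^ 2 ≤ 9 * ‖F‖ ^ 2 := by
  rw [mnorm, Real.sq_sqrt (Finset.sum_nonneg fun _ _ ↦ Finset.sum_nonneg fun _ _ ↦ sq_nonneg _)]
  calc ∑ i, ∑ j, F i j ^ 2 ≤ ∑ _i : Fin 3, ∑ _j : Fin 3, ‖F‖ ^ 2 := by
        refine Finset.sum_le_sum fun i _ ↦ Finset.sum_le_sum fun j _ ↦ sq_le_sq.2 ?_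
        exact ((norm_le_pi_norm (F i) j).trans (norm_le_pi_norm F i)).trans (le_abs_self _)
    _ = 9 * ‖F‖ ^ 2 := by
        simp only [Finset.sum_const, Finset.card_univ, Fintype.card_fin, nsmul_eq_mul]
        norm_num [← mul_assoc]

lemma sum_sq_components_le (ξ : Xi) :
    mnorm ξ.1 ^ 2 + mnorm ξ.2.1 ^ 2 + ξ.2.2 ^ 2 ≤ 19 * ‖ξ‖ ^ 2 := by
  have hF : ‖ξ.1‖ ^ 2 ≤ ‖ξ‖ ^ 2 := by gcongr; exact norm_fst_le ξ
  have hζ : ‖ξ.2.1‖ ^ 2 ≤ ‖ξ‖ ^ 2 := by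
    gcongr
    exact (norm_fst_le ξ.2).trans (norm_snd_le ξ)
  have hw : ξ.2.2 ^ 2 ≤ ‖ξ‖ ^ 2 := by
    rw [← sq_abs]
    gcongr
    exact (norm_snd_le ξ.2).trans (norm_snd_le ξ)
  linarith [mnorm_sq_le ξ.1, mnorm_sq_le ξ.2.1]

lemma sum_sq_differences_le (ξ ξ' : Xi) (θ θ' : ℝ) (v v' : Vec3) :
    mnorm (ξ.1 - ξ'.1) ^ 2 + mnorm (ξ.2.1 - ξ'.2.1) ^ 2 + (ξ.2.2 - ξ'.2.2) ^ 2 + (θ - θ') ^ 2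
        + ∑ i, (v i - v' i) ^ 2 ≤
      19 * (‖ξ - ξ'‖ ^ 2 + (θ - θ') ^ 2 + ‖WithLp.toLp 2 v - WithLp.toLp 2 v'‖ ^ 2) := by
  have hv : ‖WithLp.toLp 2 v - WithLp.toLp 2 v'‖ ^ 2 = ∑ i, (v i - v' i) ^ 2 := by
    simp [EuclideanSpace.real_norm_sq_eq]
  have hξ : mnorm (ξ.1 - ξ'.1) ^ 2 + mnorm (ξ.2.1 - ξ'.2.1) ^ 2 + (ξ.2.2 - ξ'.2.2) ^ 2 ≤
      19 * ‖ξ - ξ'‖ ^ 2 := sum_sq_components_le (ξ - ξ')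
  linarith [sq_nonneg (θ - θ'), sq_nonneg ‖WithLp.toLp 2 v - WithLp.toLp 2 v'‖]

lemma mem_stateSlab_of_mem_Gamma {M δ : ℝ} (hδ : 0 ≤ δ) {U : FullState} (hU : U ∈ Gamma M δ) :
    (U.1, U.2.2) ∈ stateSlab Xi M δ := by
  obtain ⟨hF, hζ, hw, -, hδθ, hθM⟩ := hU
  refine ⟨?_, hδθ⟩
  simp only [Prod.norm_def, max_le_iff, Real.norm_of_nonneg (hδ.trans hδθ)]
  exact ⟨⟨(norm_le_mnorm _).trans hF, (norm_le_mnorm _).trans hζ, hw⟩, hθM⟩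

/-- The weight `|ξ|_{p,q,r} + θ ^ ℓ` of the growth conditions. -/
def xiWeight (p q r ℓ : ℝ) (x : Xi × ℝ) : ℝ := xiNorm p q r x.1 + x.2 ^ ℓ

lemma isSuperlinearOn_xiWeight {p q r ℓ : ℝ} (hp : 1 < p) (hq : 1 < q) (hr : 1 < r) (hl : 1 < ℓ) :
    IsSuperlinearOn (xiWeight p q r ℓ) (stateDomain Xi) := by
  have hF₀ : ∀ x : Xi × ℝ, 0 ≤ mnorm x.1.1 := fun _ ↦ Real.sqrt_nonneg _
  have hζ₀ : ∀ x : Xi × ℝ, 0 ≤ mnorm x.1.2.1 := fun _ ↦ Real.sqrt_nonneg _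
  have hθ₀ : ∀ x ∈ stateDomain Xi, 0 ≤ x.2 := fun x hx ↦ hx.2.le
  refine ⟨fun x hx ↦ ?_, fun ε hε ↦ ?_⟩
  · have := Real.rpow_nonneg (hF₀ x) p
    have := Real.rpow_nonneg (hζ₀ x) q
    have := Real.rpow_nonneg (hθ₀ x hx) ℓ
    unfold xiWeight xiNorm
    positivity
  obtain ⟨C₁, hC₁⟩ := exists_forall_le_mul_rpow_add hp hε
  obtain ⟨C₂, hC₂⟩ := exists_forall_le_mul_rpow_add hq hε
  obtain ⟨C₃, hC₃⟩ := exists_forall_le_mul_rpow_add hr hε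
  obtain ⟨C₄, hC₄⟩ := exists_forall_le_mul_rpow_add hl hε
  refine ⟨C₁ + C₂ + C₃ + C₄, fun x hx ↦ ?_⟩
  calc ‖x‖ ≤ ‖x.1.1‖ + ‖x.1.2.1‖ + ‖x.1.2.2‖ + ‖x.2‖ := by
        simp only [Prod.norm_def, max_le_iff]
        refine ⟨⟨?_, ?_, ?_⟩, ?_⟩ <;>
          linarith [norm_nonneg x.1.1, norm_nonneg x.1.2.1, norm_nonneg x.1.2.2, norm_nonneg x.2]
    _ ≤ mnorm x.1.1 + mnorm x.1.2.1 + |x.1.2.2| + x.2 := by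
        gcongr
        exacts [norm_le_mnorm _, norm_le_mnorm _, le_rfl, (Real.norm_of_nonneg (hθ₀ x hx)).le]
    _ ≤ ε * xiWeight p q r ℓ x + (C₁ + C₂ + C₃ + C₄) := by
        unfold xiWeight xiNorm
        linarith [hC₁ _ (hF₀ x), hC₂ _ (hζ₀ x), hC₃ _ (abs_nonneg x.1.2.2), hC₄ _ (hθ₀ x hx)]

end Coordinates

/-- Appendix Lemma A.2(1), coercivity of the relative entropy. -/
theorem coercivity_relative_entropy
    (ψ : Xi → ℝ → ℝ) (c p q r ℓ : ℝ)
    (hψ3 : PsiC3 ψ) (hconv : PsiConvex ψ)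
    (hgrow : GrowthCond ψ c p q r ℓ)
    (hp : 4 ≤ p) (hq : 1 < q) (hr : 1 < r) (hl : 1 < ℓ)
    (M δ : ℝ) (hM : 0 < M) (hδ : 0 < δ) :
    ∃ R K₁ K₂ : ℝ, 0 < K₁ ∧ 0 < K₂ ∧
      ∀ (ξ : Xi) (v : Vec3) (θ : ℝ), 0 < θ → ∀ U' ∈ Gamma M δ,
        (R < xiNorm p q r ξ + θ ^ ℓ + (vnorm v)^2 →
          K₁ / 2 * (xiNorm p q r ξ + θ ^ ℓ + (vnorm v)^2)
            ≤ relEnt ψ ξ v θ U'.1 U'.2.1 U'.2.2) ∧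
        (xiNorm p q r ξ + θ ^ ℓ + (vnorm v)^2 ≤ R →
          K₂ * (mnorm (ξ.1 - U'.1.1)^2 + mnorm (ξ.2.1 - U'.1.2.1)^2
              + (ξ.2.2 - U'.1.2.2)^2 + (θ - U'.2.2)^2
              + ∑ i, (v i - U'.2.1 i)^2)
            ≤ relEnt ψ ξ v θ U'.1 U'.2.1 U'.2.2) := by
  have hψ2 : ContDiffOn ℝ 2 (Function.uncurry ψ) (stateDomain Xi) := hψ3.of_le (by norm_num)
  have hdiff := differentiableAt_uncurry (hψ2.of_le (by norm_num))
  obtain ⟨hc, henergy, -, hentropy⟩ := hgrow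
  obtain ⟨R, K₁, K₂, hK₁, hK₂, h⟩ := coercivity_relative_entropy_general
    (V := EuclideanSpace ℝ (Fin 3)) hc (isThermodynamicallyStable_uncurry hψ2 hconv)
    (isSuperlinearOn_xiWeight (by linarith) hq hr hl)
    (fun x hx ↦ eHat_eq_internalEnergyOf (hdiff x hx) ▸ (henergy x.1 x.2 hx.2).1)
    (fun ε hε ↦ (hentropy ε hε).imp fun R hR x hx hlarge ↦
      etaHat_eq_entropyOf (hdiff x hx) ▸ (neg_le_abs _).trans (hR x.1 x.2 hx.2 hlarge))
    M hδ
  refine ⟨R, K₁, K₂ / 19, hK₁, by positivity, fun ξ v θ hθ U' hU' ↦ ?_⟩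
  have hslab := mem_stateSlab_of_mem_Gamma hδ.le hU'
  rw [relEnt_eq_relativeEntropyOf (hdiff _ (mem_stateDomain hθ))
    (hdiff _ (stateSlab_subset_stateDomain hδ hslab)), vnorm_eq_norm_toLp]
  obtain ⟨hlarge, hsmall⟩ := h _ (mem_stateDomain hθ) _ hslab (WithLp.toLp 2 v)
    (WithLp.toLp 2 U'.2.1) (vnorm_eq_norm_toLp U'.2.1 ▸ hU'.2.2.2.1)
  refine ⟨hlarge, fun hle ↦ le_trans ?_ (hsmall hle)⟩
  linarith [mul_le_mul_of_nonneg_left (sum_sq_differences_le ξ U'.1 θ U'.2.2 v U'.2.1)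
    (div_pos hK₂ (by norm_num : (0 : ℝ) < 19)).le]

end
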